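/- Markov move II (stabilization) property of the six-vertex Markov trace: the 8×8 matrix I₂ ⊗ R is invertible over K, and for every 4×4 matrix M over K one has Tr((h⊗h⊗h)·(M ⊗ I₂)·(I₂ ⊗ R)) = (1/(1+q))·Tr((h⊗h)·M) and Tr((h⊗h⊗h)·(M ⊗ I₂)·(I₂ ⊗ R)⁻¹) = (q/(1+q))·Tr((h⊗h)·M). In the notation of the Akutsu–Wadati construction, φ(A·Gₙ) = τ·φ(A) and φ(A·Gₙ⁻¹) = τ̄·φ(A) with τ = 1/(1+q) and τ̄ = q/(1+q). -/

import Mathlib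

open Matrix Kronecker

set_option synthInstance.maxHeartbeats 1000000
set_option maxHeartbeats 1000000

noncomputable section

/-- The ground field `K = ℚ(t)` of rational functions in one variable over `ℚ`. -/
abbrev K : Type := RatFunc ℚ

/-- The variable `t`, a square root of `q`. -/
def t : K := RatFunc.X

/-- `q = t²`. -/
def q : K := t ^ 2

/-- Kronecker product of square matrices, flattened with the lexicographic
(row-major) index ordering: the pair `(i, j)` corresponds to position `i * n + j`. -/
def kron {m n : ℕ} (A : Matrix (Fin m) (Fin m) K) (B : Matrix (Fin n) (Fin n) K) :
    Matrix (Fin (m * n)) (Fin (m * n)) K :=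
  Matrix.reindex finProdFinEquiv finProdFinEquiv (A ⊗ₖ B)

/-- The braided R-matrix of the two-state (six-vertex) model, with rows and columns
indexed by pairs `(i,j) ∈ {1,2}²` in the order `(1,1),(1,2),(2,1),(2,2)`;
here `-t` represents `-q^{1/2}`. -/
def R : Matrix (Fin 4) (Fin 4) K :=
  !![1,  0,  0,     0;
     0,  0,  -t,    0;
     0, -t,  1 - q, 0;
     0,  0,  0,     1]

/-- The weight matrix `h = (1/(1+q))·diag(1, q)`. -/
def h : Matrix (Fin 2) (Fin 2) K := (1 + q)⁻¹ • !![1, 0; 0, q]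

lemma t_ne_zero : t ≠ 0 := RatFunc.X_ne_zero

lemma one_add_q_ne_zero : 1 + q ≠ 0 := by
  have hp : (1 + Polynomial.X ^ 2 : Polynomial ℚ) ≠ 0 := fun e => by
    simpa using congrArg (Polynomial.eval 0) e
  have hq : 1 + q = algebraMap (Polynomial ℚ) K (1 + Polynomial.X ^ 2) := by
    simp [q, t]
  rw [hq]
  exact RatFunc.algebraMap_ne_zero hp

lemma kron_apply {m n : ℕ} (A : Matrix (Fin m) (Fin m) K) (B : Matrix (Fin n) (Fin n) K)
    (i j : Fin (m * n)) :
    kron A B i j = A i.divNat j.divNat * B i.modNat j.modNat := rfl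

lemma kron_mul_kron {m n : ℕ} (A C : Matrix (Fin m) (Fin m) K)
    (B D : Matrix (Fin n) (Fin n) K) : kron A B * kron C D = kron (A * C) (B * D) := by
  simp [kron, Matrix.mul_kronecker_mul, Matrix.submatrix_mul_equiv]

lemma kron_one_one {m n : ℕ} :
    kron (1 : Matrix (Fin m) (Fin m) K) (1 : Matrix (Fin n) (Fin n) K) = 1 := by
  simp [kron]

lemma kron_diagonal {m n : ℕ} (d : Fin m → K) (e : Fin n → K) :
    kron (diagonal d) (diagonal e) = diagonal fun i => d i.divNat * e i.modNat := by
  rw [kron, Matrix.diagonal_kronecker_diagonal, Matrix.reindex_apply,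
    Matrix.submatrix_diagonal_equiv]
  rfl

/-- The inverse of the braided R-matrix. -/
def Rinv : Matrix (Fin 4) (Fin 4) K :=
  !![1, 0, 0, 0;
     0, (q - 1) / q, -t⁻¹, 0;
     0, -t⁻¹, 0, 0;
     0, 0, 0, 1]

lemma R_mul_Rinv : R * Rinv = 1 := by
  have ht := t_ne_zero
  ext i j
  fin_cases i <;> fin_cases j <;>
    simp [R, Rinv, q, Matrix.mul_apply, Fin.sum_univ_four] <;> field_simp <;> ring

lemma kron_one_R_mul_kron_one_Rinv :
    kron (1 : Matrix (Fin 2) (Fin 2) K) R * kron (1 : Matrix (Fin 2) (Fin 2) K) Rinv = 1 := by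
  rw [kron_mul_kron, R_mul_Rinv, one_mul, kron_one_one]

/-- If the partial trace of `(1 ⊗ diag d) * X` over the last factor is the scalar `c`, then
stabilization by `X` multiplies the trace weighted by `diag d` by `c`. -/
lemma trace_stabilization (d : Fin 2 → K) (X M : Matrix (Fin 4) (Fin 4) K) (c : K)
    (h₀₀ : d 0 * X 0 0 + d 1 * X 1 1 = c) (h₀₁ : d 0 * X 0 2 + d 1 * X 1 3 = 0)
    (h₁₀ : d 0 * X 2 0 + d 1 * X 3 1 = 0) (h₁₁ : d 0 * X 2 2 + d 1 * X 3 3 = c) :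
    Matrix.trace (kron (kron (diagonal d) (diagonal d)) (diagonal d) *
        (kron M (1 : Matrix (Fin 2) (Fin 2) K) * kron (1 : Matrix (Fin 2) (Fin 2) K) X)) =
      c * Matrix.trace (kron (diagonal d) (diagonal d) * M) := by
  rw [kron_diagonal, kron_diagonal]
  simp only [Matrix.trace, Matrix.diag_apply, Matrix.diagonal_mul]
  simp only [Matrix.mul_apply, kron_apply, Fin.sum_univ_succ, Fin.divNat, Fin.modNat]
  simp [Matrix.one_apply, Fin.ext_iff]
  linear_combination (d 0 * d 0 * M 0 0 + d 1 * d 0 * M 2 2) * h₀₀ +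
    (d 0 * d 1 * M 1 0 + d 1 * d 1 * M 3 2) * h₀₁ +
    (d 0 * d 0 * M 0 1 + d 1 * d 0 * M 2 3) * h₁₀ +
    (d 0 * d 1 * M 1 1 + d 1 * d 1 * M 3 3) * h₁₁

lemma h_eq_diagonal : h = diagonal ![(1 + q)⁻¹, (1 + q)⁻¹ * q] := by
  ext i j
  fin_cases i <;> fin_cases j <;> simp [h]

/-- Markov move II (stabilization) property of the six-vertex Markov
trace: the 8×8 matrix `I₂ ⊗ R` is invertible over `K`, and for every 4×4 matrix `M`
over `K` one has `Tr((h⊗h⊗h)·(M ⊗ I₂)·(I₂ ⊗ R)) = (1/(1+q))·Tr((h⊗h)·M)` and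
`Tr((h⊗h⊗h)·(M ⊗ I₂)·(I₂ ⊗ R)⁻¹) = (q/(1+q))·Tr((h⊗h)·M)`; i.e.
`φ(A·Gₙ) = τ·φ(A)` and `φ(A·Gₙ⁻¹) = τ̄·φ(A)` with `τ = 1/(1+q)`, `τ̄ = q/(1+q)`. -/
theorem markov_move_II_six_vertex :
    IsUnit (kron (1 : Matrix (Fin 2) (Fin 2) K) R) ∧
    ∀ M : Matrix (Fin 4) (Fin 4) K,
      Matrix.trace (kron (kron h h) h * (kron M (1 : Matrix (Fin 2) (Fin 2) K) *
          kron (1 : Matrix (Fin 2) (Fin 2) K) R)) =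
        (1 + q)⁻¹ * Matrix.trace (kron h h * M) ∧
      Matrix.trace (kron (kron h h) h * (kron M (1 : Matrix (Fin 2) (Fin 2) K) *
          (kron (1 : Matrix (Fin 2) (Fin 2) K) R)⁻¹)) =
        (q / (1 + q)) * Matrix.trace (kron h h * M) := by
  refine ⟨IsUnit.of_mul_eq_one _ kron_one_R_mul_kron_one_Rinv, fun M => ?_⟩
  have hq := one_add_q_ne_zero
  have hq0 : q ≠ 0 := pow_ne_zero 2 t_ne_zero
  rw [Matrix.inv_eq_right_inv kron_one_R_mul_kron_one_Rinv, h_eq_diagonal]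
  constructor <;> apply trace_stabilization <;> simp [R, Rinv] <;> field_simp <;> ring
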